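/- Let D ≥ 2 and consider the sequence of polynomial differential operators 0 → Ω⁰ →(d) Ω¹ →(δd) Ω¹ →(δ) Ω⁰ → 0, where Ω⁰ = ℂ[x^0,…,x^{D−1}], Ω¹ is the space of polynomial vector fields, (dR)_μ = ∂_μ R, (δP) = Σ_μ ∂^μ P_μ, and (δdP)_μ = □P_μ − ∂_μ(Σ_ν ∂^ν P_ν). This sequence is exact at the last two terms: (i) δ : Ω¹ → Ω⁰ is surjective, i.e. every polynomial f can be written as f = Σ_μ ∂^μ P_μ for some polynomial vector field P; and (ii) every divergence-free polynomial vector field is in the image of δd, i.e. if Σ_μ ∂^μ P_μ = 0 then there exists a polynomial vector field Q with P_μ = □Q_μ − ∂_μ(Σ_ν ∂^ν Q_ν) for all μ. -/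

import Mathlib

open MvPolynomial

/-- The partial derivative `∂_μ` on `ℂ[x^0, …, x^{D-1}]`, as a linear map. -/
noncomputable def pd (D : ℕ) (μ : Fin D) :
    MvPolynomial (Fin D) ℂ →ₗ[ℂ] MvPolynomial (Fin D) ℂ :=
  (pderiv μ).toLinearMap

/-- The raised-index derivative `∂^μ = η^{μμ} ∂_μ` for the Minkowski metric
`η = diag(-1, 1, …, 1)` (no sum over `μ`). -/
noncomputable def pdU (D : ℕ) (μ : Fin D) :
    MvPolynomial (Fin D) ℂ →ₗ[ℂ] MvPolynomial (Fin D) ℂ :=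
  (if (μ : ℕ) = 0 then (-1 : ℂ) else 1) • pd D μ

/-- The d'Alembertian `□ = Σ_μ ∂^μ ∂_μ`. -/
noncomputable def boxOp (D : ℕ) :
    MvPolynomial (Fin D) ℂ →ₗ[ℂ] MvPolynomial (Fin D) ℂ :=
  ∑ μ : Fin D, (pdU D μ) ∘ₗ (pd D μ)

/-!
Split off one term of the wave operator, `□ = η_i ∂_i² + L`. Integrating twice in `x^i` inverts the
first term and commutes with `L`, which is locally nilpotent because it lowers degrees, so a finite
Neumann series solves `□ v = u`. Every operator in the series commutes with `∂_j` for `j ≠ i`;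
correcting the `x^j`-antiderivative of a harmonic polynomial by such a solution shows that `∂_j`
maps the harmonic polynomials onto themselves.

If `P` is divergence free, solve `□ Q = P` componentwise. Then `δ Q` is harmonic, so it equals
`η_j ∂_j h` with `□ h = 0`, and subtracting `h` from the `j`-th component of `Q` gives a
divergence-free solution of `□ Q = P`.
-/

section PartialDerivatives

variable {σ R : Type*} [CommSemiring R]

variable (R) in
/-- The partial derivative `∂_i`, as an element of the endomorphism ring of the module of
polynomials. -/
noncomputable def pderivEnd (i : σ) : Module.End R (MvPolynomial σ R) :=
  (pderiv i).toLinearMap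

@[simp]
theorem pderivEnd_apply (i : σ) (p : MvPolynomial σ R) : pderivEnd R i p = pderiv i p :=
  rfl

theorem commute_pderivEnd (i j : σ) : Commute (pderivEnd R i) (pderivEnd R j) := by
  classical
  refine LinearMap.ext fun p => ?_
  ext m
  simp only [Module.End.mul_apply, pderivEnd_apply, coeff_pderiv, add_right_comm m]
  obtain rfl | h := eq_or_ne i j
  · rfl
  · simp [h, h.symm, mul_right_comm]

theorem pderiv_apply_of_commute {i : σ} {T : Module.End R (MvPolynomial σ R)}
    (hT : Commute (pderivEnd R i) T) (p : MvPolynomial σ R) :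
    pderiv i (T p) = T (pderiv i p) :=
  LinearMap.congr_fun hT.eq p

theorem totalDegree_pderiv_le (i : σ) (p : MvPolynomial σ R) :
    (pderiv i p).totalDegree ≤ p.totalDegree - 1 := by
  refine Finset.sup_le fun m hm => Nat.le_sub_one_of_lt ?_
  rw [mem_support_iff, coeff_pderiv] at hm
  have hdeg := le_totalDegree (mem_support_iff.mpr (left_ne_zero_of_mul hm))
  rw [Finsupp.sum_add_index' (fun _ => rfl) fun _ _ _ => rfl,
    Finsupp.sum_single_index rfl] at hdeg
  exact hdeg

theorem pderiv_eq_zero_of_totalDegree_eq_zero {p : MvPolynomial σ R} (hp : p.totalDegree = 0)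
    (i : σ) : pderiv i p = 0 := by
  rw [totalDegree_eq_zero_iff_eq_C.mp hp, pderiv_C]

end PartialDerivatives

section Antiderivative

variable {σ R : Type*} [CommSemiring R] [Algebra ℚ R]

variable (R) in
/-- Formal integration in the variable `x^i`, with constant of integration zero. -/
noncomputable def antideriv (i : σ) : Module.End R (MvPolynomial σ R) :=
  (basisMonomials σ R).constr R fun m =>
    monomial (m + Finsupp.single i 1) (algebraMap ℚ R (m i + 1)⁻¹)

theorem antideriv_monomial (i : σ) (m : σ →₀ ℕ) (a : R) :
    antideriv R i (monomial m a) =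
      monomial (m + Finsupp.single i 1) (a * algebraMap ℚ R (m i + 1)⁻¹) := by
  have h := (basisMonomials σ R).constr_basis R (fun m =>
    monomial (m + Finsupp.single i 1) (algebraMap ℚ R (m i + 1)⁻¹)) m
  rw [coe_basisMonomials] at h
  rw [← mul_one a, ← smul_eq_mul, ← smul_monomial, map_smul, antideriv, h, smul_monomial]
  simp

theorem pderivEnd_mul_antideriv (i : σ) : pderivEnd R i * antideriv R i = 1 := by
  refine (basisMonomials σ R).ext fun m => ?_
  have hm : algebraMap ℚ R (m i + 1)⁻¹ * (m i + 1) = 1 := by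
    rw [← map_natCast (algebraMap ℚ R), ← map_one (algebraMap ℚ R), ← map_add, ← map_mul,
      inv_mul_cancel₀ (Nat.cast_add_one_ne_zero _)]
  simp [antideriv_monomial, pderiv_monomial, hm]

theorem pderiv_antideriv (i : σ) (p : MvPolynomial σ R) : pderiv i (antideriv R i p) = p := by
  rw [← pderivEnd_apply, ← Module.End.mul_apply, pderivEnd_mul_antideriv, Module.End.one_apply]

theorem commute_pderivEnd_antideriv {i j : σ} (hij : i ≠ j) :
    Commute (pderivEnd R i) (antideriv R j) := by
  classical
  refine (basisMonomials σ R).ext fun m => ?_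
  simp only [coe_basisMonomials, Module.End.mul_apply, pderivEnd_apply, antideriv_monomial,
    pderiv_monomial]
  obtain hm | hm := eq_or_ne (m i) 0
  · simp [hm, hij.symm]
  · have hexp : m - Finsupp.single i 1 + Finsupp.single j 1 =
        m + Finsupp.single j 1 - Finsupp.single i 1 :=
      tsub_add_eq_add_tsub (Finsupp.single_le_iff.mpr (Nat.one_le_iff_ne_zero.mpr hm))
    rw [hexp]
    simp [hij, hij.symm, mul_comm]

end Antiderivative

section DiagonalOperators

variable {σ R : Type*} [CommSemiring R]

/-- The operator `∑_{μ ∈ s} η_μ ∂_μ²`; for `s` the set of all indices this is the wave operator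
`□` of the diagonal metric `η`. -/
noncomputable def diagLaplacian (η : σ → R) (s : Finset σ) : Module.End R (MvPolynomial σ R) :=
  ∑ μ ∈ s, η μ • pderivEnd R μ ^ 2

theorem diagLaplacian_apply (η : σ → R) (s : Finset σ) (p : MvPolynomial σ R) :
    diagLaplacian η s p = ∑ μ ∈ s, η μ • pderiv μ (pderiv μ p) := by
  simp [diagLaplacian, pow_two]

theorem commute_diagLaplacian {η : σ → R} {s : Finset σ} {T : Module.End R (MvPolynomial σ R)}
    (hT : ∀ μ ∈ s, Commute (pderivEnd R μ) T) : Commute (diagLaplacian η s) T :=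
  Commute.sum_left _ _ _ fun μ hμ => ((hT μ hμ).pow_left 2).smul_left (η μ)

theorem pderiv_diagLaplacian (η : σ → R) (s : Finset σ) (i : σ) (p : MvPolynomial σ R) :
    pderiv i (diagLaplacian η s p) = diagLaplacian η s (pderiv i p) :=
  pderiv_apply_of_commute (commute_diagLaplacian fun μ _ => commute_pderivEnd μ i).symm p

theorem totalDegree_diagLaplacian_le (η : σ → R) (s : Finset σ) (p : MvPolynomial σ R) :
    (diagLaplacian η s p).totalDegree ≤ p.totalDegree - 1 := by
  rw [diagLaplacian_apply]
  refine totalDegree_finsetSum_le fun μ _ => (totalDegree_smul_le _ _).trans ?_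
  exact (totalDegree_pderiv_le μ _).trans ((Nat.sub_le _ 1).trans (totalDegree_pderiv_le μ p))

theorem diagLaplacian_pow_apply_eq_zero (η : σ → R) (s : Finset σ) {n : ℕ}
    {p : MvPolynomial σ R} (hp : p.totalDegree ≤ n) : (diagLaplacian η s ^ (n + 1)) p = 0 := by
  induction n generalizing p with
  | zero =>
    simp [diagLaplacian_apply, pderiv_eq_zero_of_totalDegree_eq_zero (Nat.le_zero.mp hp)]
  | succ n ih =>
    rw [pow_succ, Module.End.mul_apply]
    exact ih ((totalDegree_diagLaplacian_le η s p).trans (Nat.sub_le_of_le_add hp))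

end DiagonalOperators

theorem add_mul_geom_sum_smul_eq_self {E M : Type*} [Ring E] [AddCommGroup M] [Module E M]
    {A L I : E} (hAI : A * I = 1) (hLI : Commute L I) {n : ℕ} {u : M} (hu : L ^ n • u = 0) :
    ((A + L) * (I * ∑ k ∈ Finset.range n, (-(L * I)) ^ k)) • u = u := by
  have hnil : (-(L * I)) ^ n • u = 0 := by
    rw [neg_pow, hLI.mul_pow, (hLI.pow_pow n n).eq, mul_smul, mul_smul, hu, smul_zero, smul_zero]
  have hfactor : (A + L) * I = 1 - -(L * I) := by
    rw [add_mul, hAI, sub_neg_eq_add]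
  rw [← mul_assoc, hfactor, mul_neg_geom_sum, sub_smul, hnil, one_smul, sub_zero]

section WaveOperator

variable {σ R : Type*} [Fintype σ] [CommRing R] [Algebra ℚ R] {η : σ → R} {i j : σ}

theorem exists_commute_pderivEnd_diagLaplacian_eq (hi : IsUnit (η i)) (u : MvPolynomial σ R) :
    ∃ G : Module.End R (MvPolynomial σ R),
      (∀ j ≠ i, Commute (pderivEnd R j) G) ∧ diagLaplacian η Finset.univ (G u) = u := by
  classical
  obtain ⟨a, ha⟩ := hi
  set A := η i • pderivEnd R i ^ 2
  set L := diagLaplacian η (Finset.univ.erase i)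
  set I := (↑a⁻¹ : R) • antideriv R i ^ 2
  have hsplit : diagLaplacian η Finset.univ = A + L :=
    (Finset.add_sum_erase _ _ (Finset.mem_univ i)).symm
  have hAI : A * I = 1 := by
    rw [smul_mul_smul_comm, pow_mul_pow_eq_one 2 (pderivEnd_mul_antideriv i), ← ha,
      Units.mul_inv, one_smul]
  have hI {μ : σ} (hμ : μ ≠ i) : Commute (pderivEnd R μ) I :=
    ((commute_pderivEnd_antideriv hμ).pow_right 2).smul_right _
  have hLI : Commute L I := commute_diagLaplacian fun μ hμ => hI (Finset.ne_of_mem_erase hμ)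
  refine ⟨I * ∑ k ∈ Finset.range (u.totalDegree + 1), (-(L * I)) ^ k, fun j hj => ?_, ?_⟩
  · have hjL : Commute (pderivEnd R j) L :=
      (commute_diagLaplacian fun μ _ => commute_pderivEnd μ j).symm
    exact (hI hj).mul_right <|
      Commute.sum_right _ _ _ fun k _ => (hjL.mul_right (hI hj)).neg_right.pow_right k
  · rw [hsplit]
    exact add_mul_geom_sum_smul_eq_self hAI hLI (diagLaplacian_pow_apply_eq_zero η _ le_rfl)

theorem diagLaplacian_surjective (hi : IsUnit (η i)) :
    Function.Surjective (diagLaplacian η Finset.univ) := fun u =>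
  let ⟨G, _, hG⟩ := exists_commute_pderivEnd_diagLaplacian_eq hi u
  ⟨G u, hG⟩

theorem exists_diagLaplacian_eq_zero_pderiv_eq (hij : i ≠ j) (hi : IsUnit (η i))
    {g : MvPolynomial σ R} (hg : diagLaplacian η Finset.univ g = 0) :
    ∃ h, diagLaplacian η Finset.univ h = 0 ∧ pderiv j h = g := by
  set w := antideriv R j g
  obtain ⟨G, hGcomm, hG⟩ :=
    exists_commute_pderivEnd_diagLaplacian_eq hi (diagLaplacian η Finset.univ w)
  have hw : pderiv j (diagLaplacian η Finset.univ w) = 0 := by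
    rw [pderiv_diagLaplacian, pderiv_antideriv, hg]
  refine ⟨w - G (diagLaplacian η Finset.univ w), by rw [map_sub, hG, sub_self], ?_⟩
  have hGw : pderiv j (G (diagLaplacian η Finset.univ w)) = 0 := by
    rw [pderiv_apply_of_commute (hGcomm j hij.symm), hw, map_zero]
  rw [map_sub, hGw, pderiv_antideriv, sub_zero]

end WaveOperator

section Divergence

variable {σ R : Type*} [Fintype σ] [CommSemiring R]

variable (R) in
/-- The differential `d` from functions to one-forms. -/
noncomputable def differential : MvPolynomial σ R →ₗ[R] σ → MvPolynomial σ R :=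
  LinearMap.pi (pderivEnd R)

/-- The codifferential `δ P = ∑_μ ∂^μ P_μ`, where `∂^μ = η_μ ∂_μ` for the diagonal metric with
entries `η`. -/
noncomputable def divergence (η : σ → R) : (σ → MvPolynomial σ R) →ₗ[R] MvPolynomial σ R :=
  ∑ μ, (η μ • pderivEnd R μ) ∘ₗ LinearMap.proj μ

variable {η : σ → R} {j : σ}

theorem divergence_apply (P : σ → MvPolynomial σ R) :
    divergence η P = ∑ μ, η μ • pderiv μ (P μ) := by
  simp [divergence]

theorem divergence_single [DecidableEq σ] (j : σ) (h : MvPolynomial σ R) :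
    divergence η (Pi.single j h) = η j • pderiv j h := by
  rw [divergence_apply, Finset.sum_eq_single j (fun μ _ hμ => by simp [hμ]) (by simp),
    Pi.single_eq_same]

theorem divergence_differential (p : MvPolynomial σ R) :
    divergence η (differential R p) = diagLaplacian η Finset.univ p := by
  simp [divergence_apply, diagLaplacian_apply, differential]

theorem diagLaplacian_divergence (P : σ → MvPolynomial σ R) :
    diagLaplacian η Finset.univ (divergence η P) =
      divergence η fun μ => diagLaplacian η Finset.univ (P μ) := by
  simp only [divergence_apply, map_sum, map_smul, pderiv_diagLaplacian]

theorem divergence_surjective [Algebra ℚ R] (hj : IsUnit (η j)) :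
    Function.Surjective (divergence η) := by
  classical
  obtain ⟨b, hb⟩ := hj
  refine fun f => ⟨Pi.single j ((↑b⁻¹ : R) • antideriv R j f), ?_⟩
  rw [divergence_single, Derivation.map_smul, pderiv_antideriv, smul_smul, ← hb,
    Units.mul_inv, one_smul]

end Divergence

section Maxwell

variable {σ R : Type*} [Fintype σ] [CommRing R]

/-- The Maxwell operator `δd`, encoded as `P ↦ □ P - d (δ P)`. -/
noncomputable def maxwellOperator (η : σ → R) :
    (σ → MvPolynomial σ R) →ₗ[R] σ → MvPolynomial σ R :=
  (diagLaplacian η Finset.univ).compLeft σ - differential R ∘ₗ divergence η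

variable {η : σ → R} {i j : σ}

theorem maxwellOperator_apply (Q : σ → MvPolynomial σ R) (μ : σ) :
    maxwellOperator η Q μ =
      diagLaplacian η Finset.univ (Q μ) - pderiv μ (divergence η Q) :=
  rfl

theorem divergence_maxwellOperator (Q : σ → MvPolynomial σ R) :
    divergence η (maxwellOperator η Q) = 0 := by
  have hQ : maxwellOperator η Q =
      (fun μ => diagLaplacian η Finset.univ (Q μ)) - differential R (divergence η Q) :=
    rfl
  rw [hQ, map_sub, divergence_differential, diagLaplacian_divergence, sub_self]

variable [Algebra ℚ R]

theorem exists_divergence_eq_zero_diagLaplacian_eq (hij : i ≠ j) (hi : IsUnit (η i))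
    (hj : IsUnit (η j)) {P : σ → MvPolynomial σ R} (hP : divergence η P = 0) :
    ∃ Q, divergence η Q = 0 ∧ ∀ μ, diagLaplacian η Finset.univ (Q μ) = P μ := by
  classical
  choose Q hQ using fun μ => diagLaplacian_surjective hi (P μ)
  obtain ⟨b, hb⟩ := hj
  have hharm : diagLaplacian η Finset.univ ((↑b⁻¹ : R) • divergence η Q) = 0 := by
    rw [map_smul, diagLaplacian_divergence, funext hQ, hP, smul_zero]
  obtain ⟨h, hh, hjh⟩ := exists_diagLaplacian_eq_zero_pderiv_eq hij hi hharm
  refine ⟨Q - Pi.single j h, ?_, fun μ => ?_⟩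
  · rw [map_sub, divergence_single, hjh, smul_smul, ← hb, Units.mul_inv, one_smul, sub_self]
  · rw [Pi.sub_apply, map_sub, hQ, sub_eq_self]
    obtain rfl | hμ := eq_or_ne μ j
    · rw [Pi.single_eq_same, hh]
    · rw [Pi.single_eq_of_ne hμ, map_zero]

theorem exact_maxwellOperator_divergence (hij : i ≠ j) (hi : IsUnit (η i)) (hj : IsUnit (η j)) :
    Function.Exact (maxwellOperator η) (divergence η) := by
  refine fun P => ⟨fun hP => ?_, ?_⟩
  · obtain ⟨Q, hδQ, hQ⟩ := exists_divergence_eq_zero_diagLaplacian_eq hij hi hj hP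
    refine ⟨Q, funext fun μ => ?_⟩
    rw [maxwellOperator_apply, hδQ, map_zero, sub_zero, hQ]
  · rintro ⟨Q, rfl⟩
    exact divergence_maxwellOperator Q

end Maxwell

theorem sequence_exact_at_last_two_terms_general {σ R : Type*} [Fintype σ] [CommRing R]
    [Algebra ℚ R] (η : σ → R) {i j : σ} (hij : i ≠ j) (hi : IsUnit (η i)) (hj : IsUnit (η j)) :
    Function.Surjective (divergence η) ∧ Function.Exact (maxwellOperator η) (divergence η) :=
  ⟨divergence_surjective hj, exact_maxwellOperator_divergence hij hi hj⟩

section Minkowski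

/-- The diagonal entries `(-1, 1, …, 1)` of the Minkowski metric. -/
noncomputable def minkowskiSign (D : ℕ) (μ : Fin D) : ℂ :=
  if (μ : ℕ) = 0 then -1 else 1

theorem isUnit_minkowskiSign {D : ℕ} (μ : Fin D) : IsUnit (minkowskiSign D μ) := by
  unfold minkowskiSign
  split_ifs <;> simp

theorem sum_pdU_eq_divergence {D : ℕ} (P : Fin D → MvPolynomial (Fin D) ℂ) :
    ∑ μ, pdU D μ (P μ) = divergence (minkowskiSign D) P :=
  (divergence_apply P).symm

theorem boxOp_eq_diagLaplacian (D : ℕ) :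
    boxOp D = diagLaplacian (minkowskiSign D) Finset.univ := by
  refine LinearMap.ext fun p => ?_
  rw [boxOp, LinearMap.sum_apply, diagLaplacian_apply]
  rfl

theorem maxwellOperator_minkowskiSign_apply {D : ℕ} (Q : Fin D → MvPolynomial (Fin D) ℂ)
    (μ : Fin D) :
    maxwellOperator (minkowskiSign D) Q μ =
      boxOp D (Q μ) - pd D μ (divergence (minkowskiSign D) Q) := by
  rw [boxOp_eq_diagLaplacian]
  rfl

end Minkowski

/-- Exactness of the sequence `0 → Ω⁰ →(d) Ω¹ →(δd) Ω¹ →(δ) Ω⁰ → 0` at its last two terms: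
(i) the divergence `δ : P ↦ Σ_μ ∂^μ P_μ` is surjective onto polynomials, and
(ii) every divergence-free polynomial vector field `P` can be written as
`P_μ = □Q_μ − ∂_μ(Σ_ν ∂^ν Q_ν)` for some polynomial vector field `Q`. -/
theorem sequence_exact_at_last_two_terms (D : ℕ) (hD : 2 ≤ D) :
    (∀ f : MvPolynomial (Fin D) ℂ, ∃ P : Fin D → MvPolynomial (Fin D) ℂ,
      f = ∑ μ, pdU D μ (P μ)) ∧
    (∀ P : Fin D → MvPolynomial (Fin D) ℂ, (∑ μ, pdU D μ (P μ)) = 0 →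
      ∃ Q : Fin D → MvPolynomial (Fin D) ℂ,
        ∀ μ, P μ = boxOp D (Q μ) - pd D μ (∑ ν, pdU D ν (Q ν))) := by
  obtain ⟨hsurj, hexact⟩ := sequence_exact_at_last_two_terms_general (minkowskiSign D)
    (i := ⟨0, by lia⟩) (j := ⟨1, by lia⟩) (by simp) (isUnit_minkowskiSign _)
    (isUnit_minkowskiSign _)
  simp only [sum_pdU_eq_divergence, ← maxwellOperator_minkowskiSign_apply]
  exact ⟨fun f => (hsurj f).imp fun _ => Eq.symm,
    fun P hP => ((hexact P).mp hP).imp fun _ hQ μ => (congr_fun hQ μ).symm⟩
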